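/- For every integer m ≥ 4, the polynomial X·f_{m-3}(X)^4 divides f^cyc_m(X) in F_2[X]. -/

import Mathlib

open Polynomial

/-- `fibSet m` is the set of fibbinary integers below `2^m`: integers in `{0,…,2^m-1}`
whose binary representation has no two consecutive ones. -/
noncomputable def fibSet (m : ℕ) : Finset ℕ :=
  @Finset.filter _ (fun i => ∀ j : ℕ, ¬(i.testBit j ∧ i.testBit (j + 1)))
    (Classical.decPred _) (Finset.range (2 ^ m))

/-- `fibCycSet m` is the set of integers in `{1,…,2^m-2}` whose `m`-bit binary
representation has no two cyclically consecutive ones. -/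
def fibCycSet (m : ℕ) : Finset ℕ :=
  (Finset.Icc 1 (2 ^ m - 2)).filter
    (fun i => ∀ j < m, ¬(i.testBit j ∧ i.testBit ((j + 1) % m)))

/-- The `m`-th fibbinary polynomial over `F_2`. -/
noncomputable def fibPoly (m : ℕ) : Polynomial (ZMod 2) :=
  ∑ i ∈ fibSet m, X ^ i

/-- The `m`-th cyclic fibbinary polynomial over `F_2`. -/
noncomputable def fibCycPoly (m : ℕ) : Polynomial (ZMod 2) :=
  ∑ i ∈ fibCycSet m, X ^ i

/-!
Sorting fibbinary integers by their last two bits (`0`, `01`; never `11`), and using that squaring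
is additive in characteristic two, gives `f_{m+2} = f_{m+1}² + X f_m⁴`. A cyclic fibbinary integer
of length `m + 3` is twice a fibbinary integer of length `m + 2`, or it is odd; in the latter case
its top bit vanishes, so it is `4k + 1` with `k` fibbinary of length `m`. As `0` is not counted,
`1 + f^cyc_{m+3} = f_{m+2}² + X f_m⁴`. The first recursion yields `f_{m+2} + 1 = X f_{m+1} f_m²` by
induction, and substituting this into the second identity gives the explicit factorization
`f^cyc_{m+3} = X f_m⁴ (1 + X f_{m+1}²)`.
-/

/-- A natural number is fibbinary if its binary representation has no two consecutive ones. This is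
the predicate by which `fibSet` filters, without a bound on the length. -/
def IsFibbinary (i : ℕ) : Prop :=
  ∀ j : ℕ, ¬(i.testBit j ∧ i.testBit (j + 1))

lemma isFibbinary_iff_mod_four_ne_and_div_two {i : ℕ} :
    IsFibbinary i ↔ i % 4 ≠ 3 ∧ IsFibbinary (i / 2) := by
  have low_bits : ¬(i.testBit 0 ∧ i.testBit 1) ↔ i % 4 ≠ 3 := by
    rw [Nat.testBit_add_one, Nat.testBit_zero, Nat.testBit_zero, decide_eq_true_iff,
      decide_eq_true_iff]
    omega
  simp only [IsFibbinary, ← low_bits, ← Nat.testBit_add_one]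
  exact (Nat.and_forall_add_one (p := fun j => ¬(i.testBit j ∧ i.testBit (j + 1)))).symm

lemma isFibbinary_zero : IsFibbinary 0 := by
  simp [IsFibbinary]

lemma isFibbinary_two_mul {k : ℕ} : IsFibbinary (2 * k) ↔ IsFibbinary k := by
  have not_three : 2 * k % 4 ≠ 3 := by omega
  rw [isFibbinary_iff_mod_four_ne_and_div_two, and_iff_right not_three,
    Nat.mul_div_cancel_left k two_pos]

lemma isFibbinary_four_mul_add_one {k : ℕ} : IsFibbinary (4 * k + 1) ↔ IsFibbinary k := by
  have not_three : (4 * k + 1) % 4 ≠ 3 := by omega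
  have half : (4 * k + 1) / 2 = 2 * k := by omega
  rw [isFibbinary_iff_mod_four_ne_and_div_two, and_iff_right not_three, half, isFibbinary_two_mul]

lemma not_isFibbinary_four_mul_add_three {k : ℕ} : ¬IsFibbinary (4 * k + 3) := by
  intro fib
  exact (isFibbinary_iff_mod_four_ne_and_div_two.1 fib).1 (by omega)

lemma mem_fibSet {m i : ℕ} : i ∈ fibSet m ↔ i < 2 ^ m ∧ IsFibbinary i := by
  simp only [fibSet, Finset.mem_filter, Finset.mem_range, IsFibbinary]

lemma fibSet_zero : fibSet 0 = {0} := by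
  ext i
  simp +contextual [mem_fibSet, isFibbinary_zero]

lemma fibSet_one : fibSet 1 = {0, 1} := by
  have isFibbinary_one : IsFibbinary 1 := isFibbinary_four_mul_add_one.2 isFibbinary_zero
  ext i
  rw [mem_fibSet, Finset.mem_insert, Finset.mem_singleton, pow_one]
  constructor
  · omega
  · rintro (rfl | rfl)
    · exact ⟨by decide, isFibbinary_zero⟩
    · exact ⟨by decide, isFibbinary_one⟩

lemma two_mul_mem_fibSet {m k : ℕ} : 2 * k ∈ fibSet (m + 1) ↔ k ∈ fibSet m := by
  rw [mem_fibSet, mem_fibSet, isFibbinary_two_mul, pow_succ']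
  simp

lemma four_mul_add_one_mem_fibSet {m k : ℕ} : 4 * k + 1 ∈ fibSet (m + 2) ↔ k ∈ fibSet m := by
  have bound : 4 * k + 1 < 2 ^ (m + 2) ↔ k < 2 ^ m := by rw [pow_add]; omega
  rw [mem_fibSet, mem_fibSet, isFibbinary_four_mul_add_one, bound]

lemma four_mul_add_three_notMem_fibSet {m k : ℕ} : 4 * k + 3 ∉ fibSet m :=
  fun h => not_isFibbinary_four_mul_add_three (mem_fibSet.1 h).2

lemma lt_two_pow_succ_and_not_testBit {m i : ℕ} : i < 2 ^ (m + 1) ∧ ¬i.testBit m ↔ i < 2 ^ m := by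
  constructor
  · rintro ⟨lt, top⟩
    contrapose! top
    exact Nat.testBit_of_two_pow_le_and_two_pow_add_one_gt top lt
  · intro lt
    exact ⟨lt.trans (Nat.pow_lt_pow_succ one_lt_two), by simp [Nat.testBit_lt_two_pow lt]⟩

lemma mem_fibSet_succ_and_not_testBit {m i : ℕ} :
    i ∈ fibSet (m + 1) ∧ ¬i.testBit m ↔ i ∈ fibSet m := by
  rw [mem_fibSet, mem_fibSet, and_right_comm, lt_two_pow_succ_and_not_testBit]

lemma mem_fibCycSet_succ {m i : ℕ} :
    i ∈ fibCycSet (m + 1) ↔ i ≠ 0 ∧ i ∈ fibSet (m + 1) ∧ ¬(i.testBit 0 ∧ i.testBit m) := by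
  rw [fibCycSet, Finset.mem_filter, Finset.mem_Icc, mem_fibSet]
  constructor
  · rintro ⟨⟨pos, le⟩, cyc⟩
    have lt : i < 2 ^ (m + 1) := by omega
    refine ⟨by omega, ⟨lt, fun j ⟨hj, hj'⟩ => ?_⟩, fun ⟨first, last⟩ => ?_⟩
    · have j_lt : j + 1 < m + 1 :=
        (Nat.pow_lt_pow_iff_right one_lt_two).1 ((Nat.ge_two_pow_of_testBit hj').trans_lt lt)
      exact cyc j (by omega) ⟨hj, by rwa [Nat.mod_eq_of_lt j_lt]⟩
    · exact cyc m (by omega) ⟨last, by rwa [Nat.mod_self]⟩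
  · rintro ⟨ne_zero, ⟨lt, fib⟩, ends⟩
    have ne_allOnes : i ≠ 2 ^ (m + 1) - 1 := by
      rintro rfl
      exact ends (by simp [Nat.testBit_two_pow_sub_one])
    refine ⟨by omega, fun j hj ⟨hj', hj''⟩ => ?_⟩
    obtain rfl | j_lt := (Nat.le_of_lt_succ hj).eq_or_lt
    · exact ends ⟨by rwa [Nat.mod_self] at hj'', hj'⟩
    · exact fib j ⟨hj', by rwa [Nat.mod_eq_of_lt (by omega)] at hj''⟩

lemma zero_notMem_fibCycSet {m : ℕ} : 0 ∉ fibCycSet m := by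
  simp [fibCycSet]

lemma mem_insert_zero_fibCycSet_succ_of_even {m i : ℕ} (hi : Even i) :
    i ∈ insert 0 (fibCycSet (m + 1)) ↔ i ∈ fibSet (m + 1) := by
  have first : ¬i.testBit 0 := by simpa [← Nat.even_iff] using hi
  have zero_mem : 0 ∈ fibSet (m + 1) := mem_fibSet.2 ⟨by positivity, isFibbinary_zero⟩
  obtain rfl | ne_zero := eq_or_ne i 0
  · simp [zero_mem]
  · simp [mem_fibCycSet_succ, ne_zero, first]

lemma mem_insert_zero_fibCycSet_succ_of_odd {m i : ℕ} (hi : Odd i) :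
    i ∈ insert 0 (fibCycSet (m + 1)) ↔ i ∈ fibSet m := by
  have first : i.testBit 0 := by simpa [← Nat.odd_iff] using hi
  have ne_zero : i ≠ 0 := hi.pos.ne'
  rw [← mem_fibSet_succ_and_not_testBit]
  simp [mem_fibCycSet_succ, ne_zero, first]

lemma eq_image_union_image_of_mem_iff {u s t : Finset ℕ} (even : ∀ k, 2 * k ∈ u ↔ k ∈ s)
    (one_mod_four : ∀ k, 4 * k + 1 ∈ u ↔ k ∈ t) (three_mod_four : ∀ k, 4 * k + 3 ∉ u) :
    u = s.image (2 * ·) ∪ t.image (4 * · + 1) := by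
  ext i
  have residues : (∃ k, i = 2 * k) ∨ (∃ k, i = 4 * k + 1) ∨ ∃ k, i = 4 * k + 3 := by
    have : i % 2 = 0 ∨ i % 4 = 1 ∨ i % 4 = 3 := by omega
    exact this.imp (fun _ => ⟨i / 2, by omega⟩)
      (Or.imp (fun _ => ⟨i / 4, by omega⟩) (fun _ => ⟨i / 4, by omega⟩))
  simp only [Finset.mem_union, Finset.mem_image]
  constructor
  · intro hi
    obtain ⟨k, rfl⟩ | ⟨k, rfl⟩ | ⟨k, rfl⟩ := residues
    · exact .inl ⟨k, (even k).1 hi, rfl⟩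
    · exact .inr ⟨k, (one_mod_four k).1 hi, rfl⟩
    · exact absurd hi (three_mod_four k)
  · rintro (⟨k, hk, rfl⟩ | ⟨k, hk, rfl⟩)
    · exact (even k).2 hk
    · exact (one_mod_four k).2 hk

lemma sum_pow_eq_sq_add_mul_pow_four {R : Type*} [CommSemiring R] [CharP R 2] (x : R)
    {u s t : Finset ℕ} (even : ∀ k, 2 * k ∈ u ↔ k ∈ s) (one_mod_four : ∀ k, 4 * k + 1 ∈ u ↔ k ∈ t)
    (three_mod_four : ∀ k, 4 * k + 3 ∉ u) :
    ∑ i ∈ u, x ^ i = (∑ i ∈ s, x ^ i) ^ 2 + x * (∑ i ∈ t, x ^ i) ^ 4 := by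
  have disjoint : Disjoint (s.image (2 * ·)) (t.image (4 * · + 1)) := by
    simp only [Finset.disjoint_left, Finset.mem_image]
    omega
  have sum_even : ∑ i ∈ s.image (2 * ·), x ^ i = (∑ i ∈ s, x ^ i) ^ 2 := by
    rw [Finset.sum_image (mul_right_injective₀ two_ne_zero).injOn, CharTwo.sum_sq]
    exact Finset.sum_congr rfl fun i _ => pow_mul' x 2 i
  have sum_one_mod_four : ∑ i ∈ t.image (4 * · + 1), x ^ i = x * (∑ i ∈ t, x ^ i) ^ 4 := by
    have pow_four : (∑ i ∈ t, x ^ i) ^ 4 = ∑ i ∈ t, (x ^ i) ^ 4 := sum_pow_char_pow 2 2 t _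
    rw [Finset.sum_image (fun i _ j _ h => by simpa using h), pow_four, Finset.mul_sum]
    exact Finset.sum_congr rfl fun i _ => by ring
  rw [eq_image_union_image_of_mem_iff even one_mod_four three_mod_four,
    Finset.sum_union disjoint, sum_even, sum_one_mod_four]

lemma fibPoly_zero : fibPoly 0 = 1 := by
  simp [fibPoly, fibSet_zero]

lemma fibPoly_one : fibPoly 1 = 1 + X := by
  simp [fibPoly, fibSet_one]

lemma fibPoly_add_two (n : ℕ) : fibPoly (n + 2) = fibPoly (n + 1) ^ 2 + X * fibPoly n ^ 4 :=
  sum_pow_eq_sq_add_mul_pow_four X (fun _ => two_mul_mem_fibSet)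
    (fun _ => four_mul_add_one_mem_fibSet) (fun _ => four_mul_add_three_notMem_fibSet)

lemma one_add_fibCycPoly_add_three (n : ℕ) :
    1 + fibCycPoly (n + 3) = fibPoly (n + 2) ^ 2 + X * fibPoly n ^ 4 := by
  have even (k : ℕ) : 2 * k ∈ insert 0 (fibCycSet (n + 3)) ↔ k ∈ fibSet (n + 2) := by
    rw [mem_insert_zero_fibCycSet_succ_of_even (even_two_mul k), two_mul_mem_fibSet]
  have one_mod_four (k : ℕ) : 4 * k + 1 ∈ insert 0 (fibCycSet (n + 3)) ↔ k ∈ fibSet n := by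
    rw [mem_insert_zero_fibCycSet_succ_of_odd (by grind), four_mul_add_one_mem_fibSet]
  have three_mod_four (k : ℕ) : 4 * k + 3 ∉ insert 0 (fibCycSet (n + 3)) := by
    rw [mem_insert_zero_fibCycSet_succ_of_odd (by grind)]
    exact four_mul_add_three_notMem_fibSet
  have insert_zero : ∑ i ∈ insert 0 (fibCycSet (n + 3)), X ^ i = 1 + fibCycPoly (n + 3) := by
    rw [Finset.sum_insert zero_notMem_fibCycSet, pow_zero, fibCycPoly]
  rw [← insert_zero]
  exact sum_pow_eq_sq_add_mul_pow_four X even one_mod_four three_mod_four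

lemma fibPoly_add_two_add_one (n : ℕ) :
    fibPoly (n + 2) + 1 = X * fibPoly (n + 1) * fibPoly n ^ 2 := by
  induction n with
  | zero =>
    rw [fibPoly_add_two, fibPoly_zero, fibPoly_one]
    linear_combination (1 + X) * CharTwo.two_eq_zero (R := (ZMod 2)[X])
  | succ n ih =>
    calc fibPoly (n + 3) + 1
        = (fibPoly (n + 2) + 1) ^ 2 + X * fibPoly (n + 1) ^ 4 := by
          rw [fibPoly_add_two, CharTwo.add_sq]; ring
      _ = X * (fibPoly (n + 1) ^ 2 + X * fibPoly n ^ 4) * fibPoly (n + 1) ^ 2 := by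
          rw [ih]; ring
      _ = X * fibPoly (n + 2) * fibPoly (n + 1) ^ 2 := by
          rw [fibPoly_add_two n]

lemma fibCycPoly_add_three (n : ℕ) :
    fibCycPoly (n + 3) = X * fibPoly n ^ 4 * (1 + X * fibPoly (n + 1) ^ 2) := by
  calc fibCycPoly (n + 3)
      = 1 + (1 + fibCycPoly (n + 3)) := (CharTwo.add_cancel_left _ _).symm
    _ = (fibPoly (n + 2) + 1) ^ 2 + X * fibPoly n ^ 4 := by
        rw [one_add_fibCycPoly_add_three, CharTwo.add_sq]; ring
    _ = X * fibPoly n ^ 4 * (1 + X * fibPoly (n + 1) ^ 2) := by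
        rw [fibPoly_add_two_add_one]; ring

theorem dvd_fibCycPoly (m : ℕ) (hm : 4 ≤ m) :
    X * (fibPoly (m - 3)) ^ 4 ∣ fibCycPoly m := by
  obtain ⟨n, rfl⟩ : ∃ n, m = n + 3 := Nat.exists_eq_add_of_le' (by omega)
  rw [Nat.add_sub_cancel, fibCycPoly_add_three]
  exact dvd_mul_right _ _
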